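/- arXiv:0704.3237 — 2 statements merged into one kernel-verified Lean document; each statement's English description precedes it below -/
import Mathlib

section
/- For every θ > 0 and p ≥ 1 there exists a constant C = C(θ,p) such that for every T > 0, every Banach space (B, |·|), and every continuous function R : [0,T]² → B, one has ‖R‖_θ ≤ C ( U_{θ+2/p, p}(R) + V_θ(R) ), where ‖R‖_θ = sup_{t ≠ s} |R_{ts}| / |t−s|^θ, U_{θ', p}(R) = ( ∫_{[0,T]²} ( |R_{ts}| / |t−s|^{θ'} )^p dt ds )^{1/p}, and V_θ(R) = inf_{θ₁ ∈ (0,θ)} sup_{t ≠ u ≠ s} |R_{st} − R_{ut} − R_{su}| / ( |t−u|^{θ₁} |u−s|^{θ−θ₁} ). -/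
/-!
The proof is the chaining argument of Garsia, Rodemich and Rumsey, run on two-parameter functions.

Let `G x y` be the symmetrised Besov density
`(|R x y| / |x - y| ^ (θ + 2/p)) ^ p + (|R y x| / |x - y| ^ (θ + 2/p)) ^ p`, of total mass
`A = 2 U ^ p`, and let `I x = ∫ G x y dy`. For `t ≠ s` at distance `d`, an averaging argument gives a
point `u₀` in the middle of the segment with `I u₀ ≤ 2 A / d`. From a point `x` with `I x ≤ 2 A / e`,
averaging `I + (e/4) G x` over an interval `J` of length `3 e / 16` gives `y ∈ J` with
`I y ≤ 2 A / (e/4)` and `G x y ≤ 32 A / e ^ 2` (`chain_step`). Iterating with `e = d / 4 ^ n` produces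
points `u n` converging geometrically to an endpoint `t` (`exists_chain`), and the bound on `G` reads
`‖R (u n) (u (n+1))‖ ≲ U (d / 4 ^ n) ^ θ` (`norm_le_of_density`).

Splitting `R (u n) t = R (u n) (u (n+1)) + R (u (n+1)) t + defect`, where the defect is at most
`V (2 d / 4 ^ n) ^ θ` whatever the value of `θ₁`, and summing the geometric series bounds `R u₀ t`
(`chain_bound`). The remainder `R (u n) t` tends to `R t t`, which vanishes because
`R (u n) (u (n+1))` tends to both `R t t` and `0`. Exchanging the two arguments of `R` exchanges `θ₁`
and `θ - θ₁`, so `R t u₀` obeys the same bound, and one more use of the defect estimate at `u₀`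
gives `R t s`. Uniformity of the constant in `θ₁` allows the infimum to be taken at the end.
-/

open MeasureTheory ENNReal

noncomputable section

/-! ### Choice of the chain by averaging -/

/-- One step of the chain. The weight `e / 4` is chosen so that the hypothesis on `x` reproduces
itself at `y` with `e` replaced by `e / 4`. -/
lemma chain_step {G : ℝ → ℝ → ℝ≥0∞} (hG : Measurable (Function.uncurry G)) {A e : ℝ} (hA : 0 ≤ A)
    (he : 0 < e) (hI : ∫⁻ x, ∫⁻ y, G x y ≤ ENNReal.ofReal A) {x : ℝ}
    (hx : ∫⁻ y, G x y ≤ ENNReal.ofReal (2 * A / e)) {J : Set ℝ}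
    (hJ : volume J = ENNReal.ofReal (3 * e / 16)) :
    ∃ y ∈ J, ∫⁻ z, G y z ≤ ENNReal.ofReal (2 * A / (e / 4)) ∧
      G x y ≤ ENNReal.ofReal (32 * A / e ^ 2) := by
  have hIm : Measurable fun x => ∫⁻ y, G x y := hG.lintegral_prod_right'
  have hGx : Measurable (G x) := hG.comp measurable_prodMk_left
  have h0 : volume J ≠ 0 := by
    rw [hJ]; simp only [ne_eq, ENNReal.ofReal_eq_zero, not_le]; positivity
  have h1 : volume J ≠ ∞ := by rw [hJ]; exact ENNReal.ofReal_ne_top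
  obtain ⟨y, hyJ, hy⟩ := exists_le_setLAverage (μ := volume) (s := J)
    (f := fun y => (∫⁻ z, G y z) + ENNReal.ofReal (e / 4) * G x y) h0 h1
    (hIm.add (hGx.const_mul _)).aemeasurable
  have hint : ∫⁻ y in J, ((∫⁻ z, G y z) + ENNReal.ofReal (e / 4) * G x y)
      ≤ ENNReal.ofReal (3 * A / 2) := by
    calc _ ≤ ∫⁻ y, ((∫⁻ z, G y z) + ENNReal.ofReal (e / 4) * G x y) := setLIntegral_le_lintegral _ _
      _ = (∫⁻ y, ∫⁻ z, G y z) + ENNReal.ofReal (e / 4) * ∫⁻ y, G x y := by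
          rw [lintegral_add_left hIm, lintegral_const_mul _ hGx]
      _ ≤ ENNReal.ofReal A + ENNReal.ofReal (e / 4) * ENNReal.ofReal (2 * A / e) := by gcongr
      _ = ENNReal.ofReal (3 * A / 2) := by
          rw [← ENNReal.ofReal_mul (by positivity), ← ENNReal.ofReal_add hA (by positivity)]
          congr 1; field_simp; ring
  rw [setLAverage_eq, hJ] at hy
  have hy' : (∫⁻ z, G y z) + ENNReal.ofReal (e / 4) * G x y ≤ ENNReal.ofReal (8 * A / e) := by
    refine hy.trans ((ENNReal.div_le_div_right hint _).trans_eq ?_)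
    rw [← ENNReal.ofReal_div_of_pos (by positivity)]
    congr 1; field_simp; ring
  refine ⟨y, hyJ, (le_self_add.trans hy').trans_eq ?_, ?_⟩
  · congr 1; field_simp; ring
  · have h2 := le_add_self.trans hy'
    have hpos : ENNReal.ofReal (e / 4) ≠ 0 := by
      simp only [ne_eq, ENNReal.ofReal_eq_zero, not_le]; positivity
    rw [mul_comm, ← ENNReal.le_div_iff_mul_le (Or.inl hpos) (Or.inl ENNReal.ofReal_ne_top),
      ← ENNReal.ofReal_div_of_pos (by positivity)] at h2
    refine h2.trans_eq ?_
    congr 1; field_simp; ring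

/-- `chain_step` iterated: the `n`-th point lies in `J (d / 4 ^ n)`. -/
lemma exists_chain {G : ℝ → ℝ → ℝ≥0∞} (hG : Measurable (Function.uncurry G)) {A d : ℝ}
    (hA : 0 ≤ A) (hd : 0 < d) (hI : ∫⁻ x, ∫⁻ y, G x y ≤ ENNReal.ofReal A) {J : ℝ → Set ℝ}
    (hJ : ∀ e, 0 < e → volume (J e) = ENNReal.ofReal (3 * e / 4)) {x : ℝ} (hxJ : x ∈ J d)
    (hx : ∫⁻ y, G x y ≤ ENNReal.ofReal (2 * A / d)) :
    ∃ u : ℕ → ℝ, u 0 = x ∧ (∀ n, u n ∈ J (d / 4 ^ n)) ∧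
      ∀ n, G (u n) (u (n + 1)) ≤ ENNReal.ofReal (32 * A / (d / 4 ^ n) ^ 2) := by
  have key : ∀ (n : ℕ) (x : ℝ), ∃ y, ∫⁻ z, G x z ≤ ENNReal.ofReal (2 * A / (d / 4 ^ n)) →
      y ∈ J (d / 4 ^ (n + 1)) ∧ ∫⁻ z, G y z ≤ ENNReal.ofReal (2 * A / (d / 4 ^ (n + 1))) ∧
      G x y ≤ ENNReal.ofReal (32 * A / (d / 4 ^ n) ^ 2) := by
    intro n x
    by_cases h : ∫⁻ z, G x z ≤ ENNReal.ofReal (2 * A / (d / 4 ^ n))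
    · have hv : volume (J (d / 4 ^ (n + 1))) = ENNReal.ofReal (3 * (d / 4 ^ n) / 16) := by
        rw [hJ _ (by positivity)]; congr 1; field_simp; ring
      obtain ⟨y, h1, h2, h3⟩ := chain_step hG hA (by positivity) hI h hv
      refine ⟨y, fun _ => ⟨h1, h2.trans_eq ?_, h3⟩⟩
      congr 2; field_simp; ring
    · exact ⟨0, fun h' => absurd h' h⟩
  choose f hf using key
  let u : ℕ → ℝ := fun n => Nat.rec x (fun n y => f n y) n
  have hu : ∀ n, u n ∈ J (d / 4 ^ n) ∧ ∫⁻ z, G (u n) z ≤ ENNReal.ofReal (2 * A / (d / 4 ^ n)) := by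
    intro n
    induction n with
    | zero => simpa [u] using ⟨hxJ, hx⟩
    | succ n ih => exact ⟨(hf n (u n) ih.2).1, (hf n (u n) ih.2).2.1⟩
  exact ⟨u, rfl, fun n => (hu n).1, fun n => (hf n (u n) (hu n).2).2.2⟩

/-! ### Estimates along the chain -/

/-- The pointwise density bound provided by the chain, turned into a Hölder-type bound. -/
lemma norm_le_of_density {θ p N a e δ : ℝ} (hθ : 0 < θ) (hp : 1 ≤ p) (ha : 0 ≤ a)
    (he : 0 < e) (hδ : 0 < δ) (hδe : δ ≤ 2 * e)
    (h : ENNReal.ofReal (N / δ ^ (θ + 2 / p)) ^ p ≤ ENNReal.ofReal (32 * a ^ p / e ^ 2)) :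
    N ≤ 128 * 2 ^ θ * a * e ^ θ := by
  have hp0 : 0 < p := by linarith
  have h1 : N / δ ^ (θ + 2 / p) ≤ (32 * a ^ p / e ^ 2) ^ (1 / p) := by
    have h2 := ENNReal.rpow_le_rpow h (z := 1 / p) (by positivity)
    rw [← ENNReal.rpow_mul, mul_one_div_cancel hp0.ne', ENNReal.rpow_one,
      ENNReal.ofReal_rpow_of_nonneg (by positivity) (by positivity)] at h2
    exact (ENNReal.ofReal_le_ofReal_iff (by positivity)).1 h2
  have h2 : (32 * a ^ p / e ^ 2) ^ (1 / p) = 32 ^ (1 / p) * a / e ^ (2 / p) := by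
    rw [Real.div_rpow (by positivity) (by positivity), Real.mul_rpow (by norm_num) (by positivity),
      ← Real.rpow_mul ha, mul_one_div_cancel hp0.ne', Real.rpow_one, ← Real.rpow_natCast,
      ← Real.rpow_mul he.le]
    congr 2; push_cast; ring
  have h3 : (32 : ℝ) ^ (1 / p) ≤ 32 := by
    conv_rhs => rw [← Real.rpow_one 32]
    exact Real.rpow_le_rpow_of_exponent_le (by norm_num) ((div_le_one hp0).2 hp)
  have h4 : (2 : ℝ) ^ (2 / p) ≤ 4 := by
    have : (4 : ℝ) = 2 ^ (2 : ℝ) := by norm_num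
    rw [this]
    refine Real.rpow_le_rpow_of_exponent_le (by norm_num) ?_
    rw [div_le_iff₀ hp0]; linarith
  rw [h2, div_le_iff₀ (by positivity)] at h1
  calc N ≤ 32 ^ (1 / p) * a / e ^ (2 / p) * δ ^ (θ + 2 / p) := h1
    _ ≤ 32 * a / e ^ (2 / p) * (2 * e) ^ (θ + 2 / p) := by gcongr
    _ = 32 * a / e ^ (2 / p) * (2 ^ θ * 2 ^ (2 / p) * (e ^ θ * e ^ (2 / p))) := by
        rw [Real.mul_rpow (by norm_num) he.le, Real.rpow_add (by norm_num), Real.rpow_add he]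
    _ = 32 * a * 2 ^ θ * 2 ^ (2 / p) * e ^ θ := by
        have : 0 < e ^ (2 / p) := by positivity
        field_simp
    _ ≤ 32 * a * 2 ^ θ * 4 * e ^ θ := by gcongr
    _ = 128 * 2 ^ θ * a * e ^ θ := by ring

/-- The mixed power in the defect estimate is bounded independently of how `θ` is split. -/
lemma mixed_rpow_le {θ α x y c : ℝ} (hα : α ∈ Set.Ioo 0 θ) (hx : 0 ≤ x) (hy : 0 ≤ y)
    (hc : 0 < c) (hxc : x ≤ c) (hyc : y ≤ c) : x ^ α * y ^ (θ - α) ≤ c ^ θ := by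
  have h1 := hα.1
  have h2 : 0 < θ - α := sub_pos.2 hα.2
  calc x ^ α * y ^ (θ - α) ≤ c ^ α * c ^ (θ - α) := by gcongr
    _ = c ^ θ := by rw [← Real.rpow_add hc]; congr 1; ring

/-- Bound on `R x t` by the chain from `x` to `t`; the sets `J e` are intervals at distance of
order `e` from `t`, on the side of `x`. -/
lemma chain_bound {θ p T : ℝ} (hθ : 0 < θ) (hp : 1 ≤ p) {B : Type} [NormedAddCommGroup B]
    {R : ℝ → ℝ → B}
    (hR : ContinuousOn (fun q : ℝ × ℝ => R q.1 q.2) (Set.Icc 0 T ×ˢ Set.Icc 0 T))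
    {α V : ℝ} (hα : α ∈ Set.Ioo 0 θ) (hV : 0 ≤ V)
    (hdef : ∀ t ∈ Set.Icc 0 T, ∀ u ∈ Set.Icc 0 T, ∀ s ∈ Set.Icc 0 T, t ≠ u → u ≠ s →
      ‖R s t - R u t - R s u‖ ≤ V * (|t - u| ^ α * |u - s| ^ (θ - α)))
    {G : ℝ → ℝ → ℝ≥0∞} (hG : Measurable (Function.uncurry G))
    (hRG : ∀ x ∈ Set.Icc 0 T, ∀ y ∈ Set.Icc 0 T,
      ENNReal.ofReal (‖R x y‖ / |x - y| ^ (θ + 2 / p)) ^ p ≤ G x y)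
    {a d : ℝ} (ha : 0 ≤ a) (hd : 0 < d) (hI : ∫⁻ x, ∫⁻ y, G x y ≤ ENNReal.ofReal (a ^ p))
    {t : ℝ} (ht : t ∈ Set.Icc 0 T) {J : ℝ → Set ℝ}
    (hJ : ∀ e, 0 < e → volume (J e) = ENNReal.ofReal (3 * e / 4))
    (hJT : ∀ e, 0 < e → e ≤ d → J e ⊆ Set.Icc 0 T)
    (hJt : ∀ e, 0 < e → ∀ x ∈ J e, e / 4 < |t - x| ∧ |t - x| < e)
    {x : ℝ} (hxJ : x ∈ J d) (hx : ∫⁻ y, G x y ≤ ENNReal.ofReal (2 * a ^ p / d)) :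
    ‖R x t‖ ≤ (128 * 2 ^ θ * a + 2 ^ θ * V) / (1 - (4 ^ θ)⁻¹) * d ^ θ := by
  obtain ⟨u, rfl, huJ, huG⟩ := exists_chain hG (by positivity) hd hI hJ hxJ hx
  have he : ∀ n : ℕ, 0 < d / 4 ^ n := fun n => by positivity
  have hed : ∀ n : ℕ, d / 4 ^ n ≤ d := fun n => div_le_self hd.le (one_le_pow₀ (by norm_num))
  have hes : ∀ n : ℕ, d / 4 ^ (n + 1) = d / 4 ^ n / 4 := fun n => by field_simp; ring
  have huT : ∀ n, u n ∈ Set.Icc 0 T := fun n => hJT _ (he n) (hed n) (huJ n)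
  have hut := fun n => hJt _ (he n) _ (huJ n)
  have hne : ∀ n, u (n + 1) ≠ u n := by
    intro n h
    have h1 := (hut (n + 1)).2
    have h2 := (hut n).1
    rw [h, hes] at h1
    linarith
  have hdist : ∀ n, |u n - u (n + 1)| ≤ 2 * (d / 4 ^ n) := by
    intro n
    have h1 := (hut (n + 1)).2
    have h2 := (hut n).2
    have h3 := abs_sub_le (u n) t (u (n + 1))
    rw [abs_sub_comm (u n) t] at h3
    rw [hes] at h1
    have := he n
    linarith
  have hlink : ∀ n, ‖R (u n) (u (n + 1))‖ ≤ 128 * 2 ^ θ * a * (d / 4 ^ n) ^ θ := fun n =>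
    norm_le_of_density hθ hp ha (he n) (abs_pos.2 (sub_ne_zero.2 (hne n).symm)) (hdist n)
      ((hRG _ (huT n) _ (huT (n + 1))).trans (huG n))
  set r : ℝ := (4 ^ θ)⁻¹ with hr
  have hr0 : 0 ≤ r := by positivity
  have hr1 : r < 1 := inv_lt_one_of_one_lt₀ (Real.one_lt_rpow (by norm_num) hθ)
  have hpow : ∀ n : ℕ, (d / 4 ^ n) ^ θ = d ^ θ * r ^ n := by
    intro n
    rw [Real.div_rpow hd.le (by positivity), hr, inv_pow, div_eq_mul_inv, ← Real.rpow_natCast,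
      ← Real.rpow_natCast, ← Real.rpow_mul (by norm_num), ← Real.rpow_mul (by norm_num), mul_comm θ]
  set M : ℝ := 128 * 2 ^ θ * a + 2 ^ θ * V with hM
  have hM0 : 0 ≤ M := by positivity
  have hstep : ∀ n, ‖R (u n) t‖ ≤ ‖R (u (n + 1)) t‖ + M * d ^ θ * r ^ n := by
    intro n
    have htu : t ≠ u (n + 1) := by
      intro h
      have h1 := (hut (n + 1)).1
      rw [← h, sub_self, abs_zero] at h1
      linarith [he (n + 1)]
    have h1 := hdef t ht (u (n + 1)) (huT _) (u n) (huT _) htu (hne n)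
    have h2 : |t - u (n + 1)| ^ α * |u (n + 1) - u n| ^ (θ - α) ≤ (2 * (d / 4 ^ n)) ^ θ := by
      refine mixed_rpow_le hα (abs_nonneg _) (abs_nonneg _) (by linarith [he n]) ?_ ?_
      · have := (hut (n + 1)).2
        rw [hes] at this
        linarith [he n]
      · rw [abs_sub_comm]; exact hdist n
    have h3 : ‖R (u n) t‖ ≤ ‖R (u n) t - R (u (n + 1)) t - R (u n) (u (n + 1))‖
        + ‖R (u (n + 1)) t‖ + ‖R (u n) (u (n + 1))‖ := by
      have : R (u n) t = (R (u n) t - R (u (n + 1)) t - R (u n) (u (n + 1)))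
        + R (u (n + 1)) t + R (u n) (u (n + 1)) := by abel
      conv_lhs => rw [this]
      exact norm_add₃_le
    have h4 := hlink n
    have h5 := h1.trans (mul_le_mul_of_nonneg_left h2 hV)
    rw [Real.mul_rpow (by norm_num) (he n).le, hpow] at h5
    rw [hpow] at h4
    rw [hM]
    linarith
  have hsum : ∀ n, ‖R (u 0) t‖ ≤ ‖R (u n) t‖ + M / (1 - r) * d ^ θ := by
    have hind : ∀ n, ‖R (u 0) t‖ ≤ ‖R (u n) t‖ + M * d ^ θ * ∑ k ∈ Finset.range n, r ^ k := by
      intro n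
      induction n with
      | zero => simp
      | succ n ih => rw [Finset.sum_range_succ, mul_add]; linarith [hstep n]
    intro n
    have h1 : ∑ k ∈ Finset.range n, r ^ k ≤ (1 - r)⁻¹ := by
      rw [← tsum_geometric_of_lt_one hr0 hr1]
      exact (summable_geometric_of_lt_one hr0 hr1).sum_le_tsum _ fun k _ => by positivity
    have h2 := mul_le_mul_of_nonneg_left h1 (show 0 ≤ M * d ^ θ by positivity)
    have h3 : M / (1 - r) * d ^ θ = M * d ^ θ * (1 - r)⁻¹ := by rw [div_eq_mul_inv]; ring
    rw [h3]
    exact (hind n).trans (by linarith)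
  have hu_lim : Filter.Tendsto u Filter.atTop (nhds t) := by
    rw [tendsto_iff_dist_tendsto_zero]
    refine squeeze_zero (fun n => dist_nonneg) (g := fun n : ℕ => d * (1 / 4) ^ n) (fun n => ?_) ?_
    · rw [dist_comm, Real.dist_eq]
      refine (hut n).2.le.trans_eq ?_
      rw [one_div, inv_pow, div_eq_mul_inv]
    · simpa using (tendsto_pow_atTop_nhds_zero_of_lt_one (r := (1 / 4 : ℝ)) (by norm_num)
        (by norm_num)).const_mul d
  have hcont : ∀ v : ℕ → ℝ, (∀ n, v n ∈ Set.Icc 0 T) → Filter.Tendsto v Filter.atTop (nhds t) →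
      Filter.Tendsto (fun n => R (u n) (v n)) Filter.atTop (nhds (R t t)) := by
    intro v hvT hv
    have h1 := hR (t, t) ⟨ht, ht⟩
    exact h1.tendsto.comp (tendsto_nhdsWithin_iff.2
      ⟨hu_lim.prodMk_nhds hv, Filter.Eventually.of_forall fun n => ⟨huT n, hvT n⟩⟩)
  -- The links tend to `R t t` by continuity and to `0` by the link estimate.
  have hRtt : R t t = 0 := by
    refine tendsto_nhds_unique (hcont (fun n => u (n + 1)) (fun n => huT _)
      (hu_lim.comp (Filter.tendsto_add_atTop_nat 1))) ?_
    refine squeeze_zero_norm hlink ?_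
    simp only [hpow]
    simpa using ((tendsto_pow_atTop_nhds_zero_of_lt_one hr0 hr1).const_mul (d ^ θ)).const_mul
      (128 * 2 ^ θ * a)
  have hlim := ((hcont (fun _ => t) (fun _ => ht) tendsto_const_nhds).norm).add_const
    (M / (1 - r) * d ^ θ)
  rw [hRtt, norm_zero, zero_add] at hlim
  exact ge_of_tendsto' hlim hsum

/-! ### Joining the chains from both endpoints -/

/-- The two chains and the defect at their common starting point, for intervals `Jt e`, `Js e`
approaching `t` and `s` and a middle region `J₀`. -/
lemma two_chain_bound {θ p T : ℝ} (hθ : 0 < θ) (hp : 1 ≤ p) {B : Type} [NormedAddCommGroup B]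
    {R : ℝ → ℝ → B}
    (hR : ContinuousOn (fun q : ℝ × ℝ => R q.1 q.2) (Set.Icc 0 T ×ˢ Set.Icc 0 T))
    {α V : ℝ} (hα : α ∈ Set.Ioo 0 θ) (hV : 0 ≤ V)
    (hdef : ∀ t ∈ Set.Icc 0 T, ∀ u ∈ Set.Icc 0 T, ∀ s ∈ Set.Icc 0 T, t ≠ u → u ≠ s →
      ‖R s t - R u t - R s u‖ ≤ V * (|t - u| ^ α * |u - s| ^ (θ - α)))
    {G : ℝ → ℝ → ℝ≥0∞} (hG : Measurable (Function.uncurry G))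
    (hRG : ∀ x ∈ Set.Icc 0 T, ∀ y ∈ Set.Icc 0 T,
      ENNReal.ofReal (‖R x y‖ / |x - y| ^ (θ + 2 / p)) ^ p ≤ G x y)
    (hRG' : ∀ x ∈ Set.Icc 0 T, ∀ y ∈ Set.Icc 0 T,
      ENNReal.ofReal (‖R y x‖ / |x - y| ^ (θ + 2 / p)) ^ p ≤ G x y)
    {a d : ℝ} (ha : 0 ≤ a) (hd : 0 < d) (hI : ∫⁻ x, ∫⁻ y, G x y ≤ ENNReal.ofReal (a ^ p))
    {t s : ℝ} (ht : t ∈ Set.Icc 0 T) (hs : s ∈ Set.Icc 0 T) {Jt Js : ℝ → Set ℝ} {J₀ : Set ℝ}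
    (hJt : ∀ e, 0 < e → volume (Jt e) = ENNReal.ofReal (3 * e / 4))
    (hJtT : ∀ e, 0 < e → e ≤ d → Jt e ⊆ Set.Icc 0 T)
    (hJtt : ∀ e, 0 < e → ∀ x ∈ Jt e, e / 4 < |t - x| ∧ |t - x| < e)
    (hJs : ∀ e, 0 < e → volume (Js e) = ENNReal.ofReal (3 * e / 4))
    (hJsT : ∀ e, 0 < e → e ≤ d → Js e ⊆ Set.Icc 0 T)
    (hJss : ∀ e, 0 < e → ∀ x ∈ Js e, e / 4 < |s - x| ∧ |s - x| < e)
    (hJ₀ : volume J₀ = ENNReal.ofReal (d / 2)) (hJ₀t : J₀ ⊆ Jt d) (hJ₀s : J₀ ⊆ Js d) :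
    ‖R t s‖ ≤ (2 * (128 * 2 ^ θ * a + 2 ^ θ * V) / (1 - (4 ^ θ)⁻¹) + V) * d ^ θ := by
  have hIm : Measurable fun x => ∫⁻ y, G x y := hG.lintegral_prod_right'
  obtain ⟨x, hx0, hx⟩ := exists_le_setLAverage (μ := volume) (s := J₀)
    (f := fun x => ∫⁻ y, G x y)
    (by rw [hJ₀]; simp only [ne_eq, ENNReal.ofReal_eq_zero, not_le]; positivity)
    (by rw [hJ₀]; exact ENNReal.ofReal_ne_top) hIm.aemeasurable
  have hxI : ∫⁻ y, G x y ≤ ENNReal.ofReal (2 * a ^ p / d) := by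
    rw [setLAverage_eq, hJ₀] at hx
    refine hx.trans ((ENNReal.div_le_div_right
      ((setLIntegral_le_lintegral _ _).trans hI) _).trans_eq ?_)
    rw [← ENNReal.ofReal_div_of_pos (by positivity)]
    congr 1; field_simp
  have hxT : x ∈ Set.Icc 0 T := hJtT d hd le_rfl (hJ₀t hx0)
  have h1 := chain_bound hθ hp hR hα hV hdef hG hRG ha hd hI hs hJs hJsT hJss (hJ₀s hx0) hxI
  -- The second chain is for `R` with its arguments exchanged, which turns `α` into `θ - α`.
  have hR' : ContinuousOn (fun q : ℝ × ℝ => (fun x y => R y x) q.1 q.2)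
      (Set.Icc 0 T ×ˢ Set.Icc 0 T) :=
    hR.comp continuous_swap.continuousOn fun q hq => ⟨hq.2, hq.1⟩
  have h2 := chain_bound (R := fun x y => R y x) (α := θ - α) hθ hp hR'
    ⟨sub_pos.2 hα.2, by linarith [hα.1]⟩ hV
    (fun t ht u hu s hs htu hus => by
      have := hdef s hs u hu t ht hus.symm htu.symm
      rw [sub_right_comm (R t s), sub_sub_cancel θ α, mul_comm (|t - u| ^ _), abs_sub_comm u s,
        abs_sub_comm t u]
      exact this)
    hG hRG' ha hd hI ht hJt hJtT hJtt (hJ₀t hx0) hxI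
  have hsx := hJss d hd x (hJ₀s hx0)
  have htx := hJtt d hd x (hJ₀t hx0)
  have hsx0 : s ≠ x := by
    rintro rfl
    rw [sub_self, abs_zero] at hsx; linarith [hsx.1]
  have htx0 : x ≠ t := by
    rintro rfl
    rw [sub_self, abs_zero] at htx; linarith [htx.1]
  have h3 := (hdef s hs x hxT t ht hsx0 htx0).trans (mul_le_mul_of_nonneg_left
    (mixed_rpow_le hα (abs_nonneg _) (abs_nonneg _) hd hsx.2.le
      (by rw [abs_sub_comm]; exact htx.2.le)) hV)
  have h4 : ‖R t s‖ ≤ ‖R t s - R x s - R t x‖ + ‖R x s‖ + ‖R t x‖ := by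
    have : R t s = (R t s - R x s - R t x) + R x s + R t x := by abel
    conv_lhs => rw [this]
    exact norm_add₃_le
  have h5 : (2 * (128 * 2 ^ θ * a + 2 ^ θ * V) / (1 - ((4 : ℝ) ^ θ)⁻¹) + V) * d ^ θ
      = 2 * ((128 * 2 ^ θ * a + 2 ^ θ * V) / (1 - (4 ^ θ)⁻¹) * d ^ θ) + V * d ^ θ := by ring
  rw [h5]
  linarith

/-- The estimate with the intervals of `two_chain_bound` chosen inside the segment from `t`
to `s`. -/
lemma segment_bound {θ p T : ℝ} (hθ : 0 < θ) (hp : 1 ≤ p) {B : Type} [NormedAddCommGroup B]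
    {R : ℝ → ℝ → B}
    (hR : ContinuousOn (fun q : ℝ × ℝ => R q.1 q.2) (Set.Icc 0 T ×ˢ Set.Icc 0 T))
    {α V : ℝ} (hα : α ∈ Set.Ioo 0 θ) (hV : 0 ≤ V)
    (hdef : ∀ t ∈ Set.Icc 0 T, ∀ u ∈ Set.Icc 0 T, ∀ s ∈ Set.Icc 0 T, t ≠ u → u ≠ s →
      ‖R s t - R u t - R s u‖ ≤ V * (|t - u| ^ α * |u - s| ^ (θ - α)))
    {G : ℝ → ℝ → ℝ≥0∞} (hG : Measurable (Function.uncurry G))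
    (hRG : ∀ x ∈ Set.Icc 0 T, ∀ y ∈ Set.Icc 0 T,
      ENNReal.ofReal (‖R x y‖ / |x - y| ^ (θ + 2 / p)) ^ p ≤ G x y)
    (hRG' : ∀ x ∈ Set.Icc 0 T, ∀ y ∈ Set.Icc 0 T,
      ENNReal.ofReal (‖R y x‖ / |x - y| ^ (θ + 2 / p)) ^ p ≤ G x y)
    {a : ℝ} (ha : 0 ≤ a) (hI : ∫⁻ x, ∫⁻ y, G x y ≤ ENNReal.ofReal (a ^ p))
    {t s : ℝ} (ht : t ∈ Set.Icc 0 T) (hs : s ∈ Set.Icc 0 T) (hts : t ≠ s) :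
    ‖R t s‖ ≤ (2 * (128 * 2 ^ θ * a + 2 ^ θ * V) / (1 - (4 ^ θ)⁻¹) + V) * |t - s| ^ θ := by
  have hd : 0 < |t - s| := abs_pos.2 (sub_ne_zero.2 hts)
  -- Intervals to the right and to the left of a point `c`.
  have vr : ∀ c e : ℝ, volume (Set.Ioo (c + e / 4) (c + e)) = ENNReal.ofReal (3 * e / 4) := by
    intro c e; rw [Real.volume_Ioo]; congr 1; ring
  have vl : ∀ c e : ℝ, volume (Set.Ioo (c - e) (c - e / 4)) = ENNReal.ofReal (3 * e / 4) := by
    intro c e; rw [Real.volume_Ioo]; congr 1; ring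
  have ar : ∀ c e : ℝ, 0 < e → ∀ x ∈ Set.Ioo (c + e / 4) (c + e),
      e / 4 < |c - x| ∧ |c - x| < e := by
    intro c e he x hx
    rw [abs_sub_comm, abs_of_pos (by linarith [hx.1])]
    constructor <;> linarith [hx.1, hx.2]
  have al : ∀ c e : ℝ, 0 < e → ∀ x ∈ Set.Ioo (c - e) (c - e / 4),
      e / 4 < |c - x| ∧ |c - x| < e := by
    intro c e he x hx
    rw [abs_of_pos (by linarith [hx.2])]
    constructor <;> linarith [hx.1, hx.2]
  rcases lt_or_gt_of_ne hts with h | h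
  · have hds : |t - s| = s - t := by rw [abs_sub_comm, abs_of_pos (by linarith)]
    rw [hds] at hd ⊢
    refine two_chain_bound hθ hp hR hα hV hdef hG hRG hRG' ha hd hI ht hs
      (Jt := fun e => Set.Ioo (t + e / 4) (t + e)) (Js := fun e => Set.Ioo (s - e) (s - e / 4))
      (J₀ := Set.Ioo (t + (s - t) / 4) (s - (s - t) / 4)) (fun e _ => vr t e) ?_ (ar t)
      (fun e _ => vl s e) ?_ (al s) ?_ ?_ ?_
    · intro e he hed x hx
      constructor <;> linarith [hx.1, hx.2, ht.1, hs.2]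
    · intro e he hed x hx
      constructor <;> linarith [hx.1, hx.2, ht.1, hs.2]
    · rw [Real.volume_Ioo]; congr 1; ring
    · intro x hx
      constructor <;> linarith [hx.1, hx.2]
    · intro x hx
      constructor <;> linarith [hx.1, hx.2]
  · have hds : |t - s| = t - s := abs_of_pos (by linarith)
    rw [hds] at hd ⊢
    refine two_chain_bound hθ hp hR hα hV hdef hG hRG hRG' ha hd hI ht hs
      (Jt := fun e => Set.Ioo (t - e) (t - e / 4)) (Js := fun e => Set.Ioo (s + e / 4) (s + e))
      (J₀ := Set.Ioo (s + (t - s) / 4) (t - (t - s) / 4)) (fun e _ => vl t e) ?_ (al t)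
      (fun e _ => vr s e) ?_ (ar s) ?_ ?_ ?_
    · intro e he hed x hx
      constructor <;> linarith [hx.1, hx.2, hs.1, ht.2]
    · intro e he hed x hx
      constructor <;> linarith [hx.1, hx.2, hs.1, ht.2]
    · rw [Real.volume_Ioo]; congr 1; ring
    · intro x hx
      constructor <;> linarith [hx.1, hx.2]
    · intro x hx
      constructor <;> linarith [hx.1, hx.2]

/-! ### The symmetrised density and the inequality -/

/-- The symmetrised Besov density has mass twice the Besov integral and dominates both orders of
the arguments of `R`. Outside the square it is set to zero. -/
lemma exists_density {p T : ℝ} (κ : ℝ) (hp : 1 ≤ p) {B : Type} [NormedAddCommGroup B]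
    {R : ℝ → ℝ → B}
    (hR : ContinuousOn (fun q : ℝ × ℝ => R q.1 q.2) (Set.Icc 0 T ×ˢ Set.Icc 0 T)) :
    ∃ G : ℝ → ℝ → ℝ≥0∞, Measurable (Function.uncurry G) ∧
      (∀ x ∈ Set.Icc 0 T, ∀ y ∈ Set.Icc 0 T,
        ENNReal.ofReal (‖R x y‖ / |x - y| ^ κ) ^ p ≤ G x y) ∧
      (∀ x ∈ Set.Icc 0 T, ∀ y ∈ Set.Icc 0 T,
        ENNReal.ofReal (‖R y x‖ / |x - y| ^ κ) ^ p ≤ G x y) ∧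
      ∫⁻ x, ∫⁻ y, G x y = 2 * ∫⁻ q in Set.Icc (0 : ℝ) T ×ˢ Set.Icc (0 : ℝ) T,
        ENNReal.ofReal (‖R q.1 q.2‖ / |q.1 - q.2| ^ κ) ^ p := by
  have hp0 : 0 < p := by linarith
  set S : Set (ℝ × ℝ) := Set.Icc 0 T ×ˢ Set.Icc 0 T with hS
  have hSm : MeasurableSet S := measurableSet_Icc.prod measurableSet_Icc
  have hN : Measurable (S.indicator fun q : ℝ × ℝ => ‖R q.1 q.2‖) := by
    classical
    rw [← Set.piecewise_eq_indicator]
    exact hR.norm.measurable_piecewise continuousOn_const hSm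
  let F : ℝ × ℝ → ℝ≥0∞ := fun q =>
    ENNReal.ofReal (S.indicator (fun q : ℝ × ℝ => ‖R q.1 q.2‖) q / |q.1 - q.2| ^ κ) ^ p
  have hF : Measurable F := by
    have h1 : Measurable fun q : ℝ × ℝ => |q.1 - q.2| ^ κ :=
      ((measurable_fst.sub measurable_snd).abs).pow_const _
    exact ((hN.div h1).ennreal_ofReal).pow_const _
  have hFS : ∀ q ∈ S, F q = ENNReal.ofReal (‖R q.1 q.2‖ / |q.1 - q.2| ^ κ) ^ p := by
    intro q hq
    simp only [F, Set.indicator_of_mem hq]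
  have hFint : ∫⁻ q, F q = ∫⁻ q in S, ENNReal.ofReal (‖R q.1 q.2‖ / |q.1 - q.2| ^ κ) ^ p := by
    rw [← lintegral_indicator hSm]
    congr 1
    ext q
    by_cases hq : q ∈ S
    · rw [Set.indicator_of_mem hq, hFS q hq]
    · simp [F, Set.indicator_of_notMem hq, hp0]
  have hF' : Measurable fun q : ℝ × ℝ => F q.swap := hF.comp measurable_swap
  refine ⟨fun x y => F (x, y) + F (y, x), hF.add hF', ?_, ?_, ?_⟩
  · intro x hx y hy
    exact (hFS (x, y) ⟨hx, hy⟩).symm.le.trans le_self_add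
  · intro x hx y hy
    rw [abs_sub_comm x y]
    exact (hFS (y, x) ⟨hy, hx⟩).symm.le.trans le_add_self
  · have h1 : ∀ x, Measurable fun y => F (x, y) := fun x => hF.comp measurable_prodMk_left
    have h2 : Measurable fun x => ∫⁻ y, F (x, y) := hF.lintegral_prod_right'
    have h3 : ∫⁻ x, ∫⁻ y, F (x, y) = ∫⁻ q, F q := by
      rw [Measure.volume_eq_prod, lintegral_prod _ hF.aemeasurable]
    have h4 : ∫⁻ x, ∫⁻ y, F (y, x) = ∫⁻ q, F q := by
      rw [Measure.volume_eq_prod, lintegral_prod_symm _ hF.aemeasurable]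
    simp_rw [lintegral_add_left (h1 _)]
    rw [lintegral_add_left h2, h3, h4, hFint, two_mul]

/-- Two-parameter Garsia–Rodemich–Rumsey inequality: for `θ > 0`, `p ≥ 1`
there is `C = C(θ,p)` such that for every Banach space `B` and continuous
`R : [0,T]² → B`, `‖R‖_θ ≤ C (U_{θ+2/p,p}(R) + V_θ(R))`. The norms/quantities are
`‖R‖_θ = sup_{t≠s} |R_{ts}|/|t−s|^θ`,
`U_{θ',p}(R) = (∫∫ (|R_{ts}|/|t−s|^{θ'})^p)^{1/p}` and
`V_θ(R) = inf_{θ₁∈(0,θ)} sup_{t≠u≠s} |R_{st}−R_{ut}−R_{su}|/(|t−u|^{θ₁}|u−s|^{θ−θ₁})`,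
computed in `[0,∞]`. -/
theorem statement8 (θ p : ℝ) (hθ : 0 < θ) (hp : 1 ≤ p) :
    ∃ C : ℝ, 0 < C ∧
      ∀ (T : ℝ), 0 < T →
        ∀ (B : Type) (_ : NormedAddCommGroup B) (_ : NormedSpace ℝ B) (_ : CompleteSpace B),
          ∀ R : ℝ → ℝ → B,
            ContinuousOn (fun q : ℝ × ℝ => R q.1 q.2)
              (Set.Icc 0 T ×ˢ Set.Icc 0 T) →
            ∀ t ∈ Set.Icc (0 : ℝ) T, ∀ s ∈ Set.Icc (0 : ℝ) T, t ≠ s →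
              ENNReal.ofReal (‖R t s‖ / |t - s| ^ θ) ≤
                ENNReal.ofReal C *
                  ((∫⁻ q in Set.Icc (0 : ℝ) T ×ˢ Set.Icc (0 : ℝ) T,
                      ENNReal.ofReal (‖R q.1 q.2‖ / |q.1 - q.2| ^ (θ + 2 / p)) ^ p) ^
                        (1 / p) +
                    ⨅ (θ₁ : ℝ) (_ : θ₁ ∈ Set.Ioo (0 : ℝ) θ),
                      ⨆ (t' : ℝ) (_ : t' ∈ Set.Icc (0 : ℝ) T)
                        (u : ℝ) (_ : u ∈ Set.Icc (0 : ℝ) T)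
                        (s' : ℝ) (_ : s' ∈ Set.Icc (0 : ℝ) T)
                        (_ : t' ≠ u) (_ : u ≠ s'),
                        ENNReal.ofReal (‖R s' t' - R u t' - R s' u‖ /
                          (|t' - u| ^ θ₁ * |u - s'| ^ (θ - θ₁)))) := by

  have hp0 : 0 < p := by linarith
  have hr1 : ((4 : ℝ) ^ θ)⁻¹ < 1 := inv_lt_one_of_one_lt₀ (Real.one_lt_rpow (by norm_num) hθ)
  have hr : 0 < 1 - ((4 : ℝ) ^ θ)⁻¹ := by linarith
  refine ⟨512 * 2 ^ θ / (1 - (4 ^ θ)⁻¹) + 1, by positivity, ?_⟩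
  intro T hT B _ _ _ R hR t ht s hs hts
  set C : ℝ := 512 * 2 ^ θ / (1 - (4 ^ θ)⁻¹) + 1 with hC
  have hC0 : 0 < C := by positivity
  obtain ⟨G, hG, hRG, hRG', hGI⟩ := exists_density (θ + 2 / p) hp hR
  set L : ℝ≥0∞ := ∫⁻ q in Set.Icc (0 : ℝ) T ×ˢ Set.Icc (0 : ℝ) T,
    ENNReal.ofReal (‖R q.1 q.2‖ / |q.1 - q.2| ^ (θ + 2 / p)) ^ p with hL
  have hC' : ENNReal.ofReal C ≠ 0 := by simpa using hC0
  rw [mul_comm, ← ENNReal.div_le_iff_le_mul (Or.inl hC') (Or.inl ENNReal.ofReal_ne_top)]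
  simp only [ENNReal.add_iInf]
  refine le_iInf fun α => ?_
  by_cases hα : α ∈ Set.Ioo 0 θ
  swap
  · simp [hα]
  simp only [hα, iInf_pos]
  rw [ENNReal.div_le_iff_le_mul (Or.inl hC') (Or.inl ENNReal.ofReal_ne_top), mul_comm]
  set W : ℝ≥0∞ := ⨆ (t' : ℝ) (_ : t' ∈ Set.Icc (0 : ℝ) T)
    (u : ℝ) (_ : u ∈ Set.Icc (0 : ℝ) T)
    (s' : ℝ) (_ : s' ∈ Set.Icc (0 : ℝ) T)
    (_ : t' ≠ u) (_ : u ≠ s'),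
    ENNReal.ofReal (‖R s' t' - R u t' - R s' u‖ /
      (|t' - u| ^ α * |u - s'| ^ (θ - α))) with hW
  by_cases hLtop : L = ∞
  · rw [hLtop, ENNReal.top_rpow_of_pos (by positivity), top_add, ENNReal.mul_top hC']
    exact le_top
  by_cases hWtop : W = ∞
  · rw [hWtop, add_top, ENNReal.mul_top hC']
    exact le_top
  set V : ℝ := W.toReal with hV
  have hV0 : 0 ≤ V := ENNReal.toReal_nonneg
  have hdef : ∀ t ∈ Set.Icc 0 T, ∀ u ∈ Set.Icc 0 T, ∀ s ∈ Set.Icc 0 T, t ≠ u → u ≠ s →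
      ‖R s t - R u t - R s u‖ ≤ V * (|t - u| ^ α * |u - s| ^ (θ - α)) := by
    intro t' ht' u hu s' hs' h1 h2
    have h3 : ENNReal.ofReal (‖R s' t' - R u t' - R s' u‖ /
        (|t' - u| ^ α * |u - s'| ^ (θ - α))) ≤ W :=
      le_iSup_of_le t' <| le_iSup_of_le ht' <| le_iSup_of_le u <| le_iSup_of_le hu <|
        le_iSup_of_le s' <| le_iSup_of_le hs' <| le_iSup_of_le h1 <| le_iSup_of_le h2 le_rfl
    rw [ENNReal.ofReal_le_iff_le_toReal hWtop] at h3
    have h4 : 0 < |t' - u| := abs_pos.2 (sub_ne_zero.2 h1)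
    have h5 : 0 < |u - s'| := abs_pos.2 (sub_ne_zero.2 h2)
    rwa [div_le_iff₀ (by positivity)] at h3
  set U : ℝ := (L ^ (1 / p)).toReal with hU
  have hU0 : 0 ≤ U := ENNReal.toReal_nonneg
  have hUtop : L ^ (1 / p) ≠ ∞ := ENNReal.rpow_ne_top_of_nonneg (by positivity) hLtop
  -- `2 U` dominates the `p`-th root of the mass `2 L`, since `2 ≤ 2 ^ p`.
  have hI : ∫⁻ x, ∫⁻ y, G x y ≤ ENNReal.ofReal ((2 * U) ^ p) := by
    rw [hGI, ← ENNReal.ofReal_rpow_of_nonneg (by positivity) hp0.le,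
      ENNReal.ofReal_mul (by norm_num), hU, ENNReal.ofReal_toReal hUtop,
      ENNReal.mul_rpow_of_nonneg _ _ hp0.le, ← ENNReal.rpow_mul, one_div_mul_cancel hp0.ne',
      ENNReal.rpow_one]
    gcongr
    rw [ENNReal.ofReal_ofNat]
    conv_lhs => rw [← ENNReal.rpow_one 2]
    exact ENNReal.rpow_le_rpow_of_exponent_le (by norm_num) hp
  have hmain := segment_bound hθ hp hR hα hV0 hdef hG hRG hRG' (by positivity) hI ht hs hts
  rw [← ENNReal.ofReal_toReal hUtop, ← ENNReal.ofReal_toReal hWtop, ← hU, ← hV,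
    ← ENNReal.ofReal_add hU0 hV0, ← ENNReal.ofReal_mul hC0.le]
  refine ENNReal.ofReal_le_ofReal ?_
  have hd : 0 < |t - s| := abs_pos.2 (sub_ne_zero.2 hts)
  rw [div_le_iff₀ (by positivity)]
  refine hmain.trans (mul_le_mul_of_nonneg_right ?_ (by positivity))
  have h6 : 2 * (128 * 2 ^ θ * (2 * U) + 2 ^ θ * V) / (1 - ((4 : ℝ) ^ θ)⁻¹)
      ≤ 512 * 2 ^ θ / (1 - (4 ^ θ)⁻¹) * (U + V) := by
    rw [div_mul_eq_mul_div]
    refine div_le_div_of_nonneg_right ?_ hr.le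
    have : 0 ≤ (2 : ℝ) ^ θ * V := by positivity
    linarith
  rw [hC, add_mul]
  linarith
end
end

section
/- Let d ≥ 1 and s > 0. Let μ be a probability measure on the space C(ℝ, ℝ^d) of continuous paths X : ℝ → ℝ^d which is invariant under time shifts (for every u ∈ ℝ the map X ↦ X(·+u) preserves μ), and suppose there exist constants c, θ > 0 such that μ( max_{0 ≤ t ≤ 1} |X_t| ≥ a ) ≤ c e^{−θ a^{s+1}} for all a > 0. Then there exists a constant C > 0 such that for μ-almost every path X there is a finite number R(X) with |X_t| ≤ ( C log(|t| + 1) )^{1/(s+1)} + R(X) for all t ∈ ℝ. -/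
/-!
By stationarity the events `E n`, that `|X|` reaches the level `a n = ((2/θ) log(|n|+2))^{1/(s+1)}`
somewhere on `[n, n+1]`, have probability at most `c (|n|+2)^{-2}`, which is summable over `n : ℤ`.
By Borel–Cantelli almost every path lies in only finitely many `E n`. The maxima of the path over
those finitely many intervals are absorbed into `R(X)`; on every other interval `|X t| < a ⌊t⌋`,
and the logarithm is compared with `log(|t|+1)` through `|⌊t⌋| + 2 ≤ 3(|t|+1)` and subadditivity of
`x ↦ x^{1/(s+1)}`. So `C = 2/θ` works.
-/

open MeasureTheory

noncomputable section

/-- The path space `C(ℝ, ℝ^d)` with the topology of uniform convergence on compacts is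
equipped with its Borel σ-field. -/
instance pathMeasurableSpace (d : ℕ) :
    MeasurableSpace C(ℝ, EuclideanSpace ℝ (Fin d)) := borel _

/-- Stationarity transfers the tail bound from `[0, 1]` to `[u, u+1]`. The event need not be shown
measurable, since `Measure.le_map_apply` holds for arbitrary sets. -/
lemma tail_shift {d : ℕ} {μ : Measure C(ℝ, EuclideanSpace ℝ (Fin d))}
    (hshift : ∀ u : ℝ,
      Measure.map
        (fun X : C(ℝ, EuclideanSpace ℝ (Fin d)) =>
          X.comp ⟨fun t => t + u, by continuity⟩) μ = μ)
    (u a : ℝ) :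
    μ {X : C(ℝ, EuclideanSpace ℝ (Fin d)) | ∃ t ∈ Set.Icc (0 : ℝ) 1, a ≤ ‖X (t + u)‖} ≤
      μ {X : C(ℝ, EuclideanSpace ℝ (Fin d)) | ∃ t ∈ Set.Icc (0 : ℝ) 1, a ≤ ‖X t‖} := by
  have : BorelSpace C(ℝ, EuclideanSpace ℝ (Fin d)) := ⟨rfl⟩
  have hcont : Continuous (fun X : C(ℝ, EuclideanSpace ℝ (Fin d)) =>
      X.comp ⟨fun t => t + u, by continuity⟩) := ContinuousMap.continuous_precomp _
  have h := Measure.le_map_apply (μ := μ) hcont.measurable.aemeasurable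
    {X : C(ℝ, EuclideanSpace ℝ (Fin d)) | ∃ t ∈ Set.Icc (0 : ℝ) 1, a ≤ ‖X t‖}
  rw [hshift u] at h
  exact h

/-- The level `((2/θ) log x)^{1/(s+1)}` is chosen so that the tail bound becomes
`c x^{-2}`; it is used with `x = |n| + 2`. -/
lemma tail_level {s θ : ℝ} (hs : 0 < s) (hθ : 0 < θ) {x : ℝ} (hx : 1 ≤ x) :
    Real.exp (-θ * ((2 / θ * Real.log x) ^ (1 / (s + 1))) ^ (s + 1)) = 1 / x ^ 2 := by
  have h0 : 0 ≤ 2 / θ * Real.log x := mul_nonneg (by positivity) (Real.log_nonneg hx)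
  have hx0 : 0 < x := by linarith
  rw [← Real.rpow_mul h0, one_div_mul_cancel (by linarith), Real.rpow_one]
  have : -θ * (2 / θ * Real.log x) = -(Real.log (x ^ 2)) := by
    rw [Real.log_pow]; push_cast; field_simp
  rw [this, Real.exp_neg, Real.exp_log (by positivity), one_div]

lemma summable_levels : Summable (fun n : ℤ => 1 / (|(n : ℝ)| + 2) ^ 2) := by
  have h := (Real.summable_one_div_int_add_rpow (1 / 2) 2).2 (by norm_num)
  refine Summable.of_nonneg_of_le (fun n => by positivity) (fun n => ?_) h
  rw [Real.rpow_two]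
  -- `n + 1/2` never vanishes, so the comparison has no junk division at `n = 0`
  have hne : (n : ℝ) + 1 / 2 ≠ 0 := by
    intro h
    have h2 : (2 * n + 1 : ℝ) = 0 := by linarith
    have h3 : 2 * n + 1 = 0 := by exact_mod_cast h2
    omega
  have hpos : 0 < |(n : ℝ) + 1 / 2| := abs_pos.2 hne
  have hle : |(n : ℝ) + 1 / 2| ≤ |(n : ℝ)| + 2 := by
    refine (abs_add_le _ _).trans ?_
    norm_num [abs_of_pos]
  gcongr

/-- If `μ` is a time-shift invariant probability measure on
`C(ℝ, ℝ^d)` with the tail bound `μ(max_{0≤t≤1} |X_t| ≥ a) ≤ c e^{−θ a^{s+1}}`, then there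
is `C > 0` such that `μ`-almost every path satisfies
`|X_t| ≤ (C log(|t|+1))^{1/(s+1)} + R(X)` for all `t`, with a path-dependent finite `R(X)`. -/
theorem statement14 (d : ℕ) (hd : 1 ≤ d) (s : ℝ) (hs : 0 < s)
    (μ : Measure C(ℝ, EuclideanSpace ℝ (Fin d))) (hprob : IsProbabilityMeasure μ)
    -- invariance under every time shift `X ↦ X(· + u)`
    (hshift : ∀ u : ℝ,
      Measure.map
        (fun X : C(ℝ, EuclideanSpace ℝ (Fin d)) =>
          X.comp ⟨fun t => t + u, by continuity⟩) μ = μ)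
    -- the tail bound for the maximum over a unit time interval
    (c θ : ℝ) (hc : 0 < c) (hθ : 0 < θ)
    (htail : ∀ a : ℝ, 0 < a →
      μ {X : C(ℝ, EuclideanSpace ℝ (Fin d)) | ∃ t ∈ Set.Icc (0 : ℝ) 1, a ≤ ‖X t‖} ≤
        ENNReal.ofReal (c * Real.exp (-θ * a ^ (s + 1)))) :
    ∃ C : ℝ, 0 < C ∧
      ∀ᵐ X ∂μ, ∃ R : ℝ, ∀ t : ℝ,
        ‖X t‖ ≤ (C * Real.log (|t| + 1)) ^ (1 / (s + 1)) + R := by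
  have hp0 : 0 ≤ 1 / (s + 1) := by positivity
  have hp1 : 1 / (s + 1) ≤ 1 := by rw [div_le_one (by linarith)]; linarith
  have hK : 0 < 2 / θ := by positivity
  refine ⟨2 / θ, hK, ?_⟩
  set a : ℤ → ℝ := fun n => (2 / θ * Real.log (|(n : ℝ)| + 2)) ^ (1 / (s + 1)) with ha
  have hapos : ∀ n, 0 < a n := fun n =>
    Real.rpow_pos_of_pos (mul_pos hK (Real.log_pos (by linarith [abs_nonneg (n : ℝ)]))) _
  set E : ℤ → Set C(ℝ, EuclideanSpace ℝ (Fin d)) := fun n =>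
    {X | ∃ t ∈ Set.Icc (0 : ℝ) 1, a n ≤ ‖X (t + n)‖} with hE
  have hμE : ∀ n, μ (E n) ≤ ENNReal.ofReal (c * (1 / (|(n : ℝ)| + 2) ^ 2)) := fun n => by
    have h := (tail_shift hshift n (a n)).trans (htail (a n) (hapos n))
    rwa [tail_level hs hθ (by linarith [abs_nonneg (n : ℝ)])] at h
  have hsum : ∑' n, μ (E n) ≠ ⊤ :=
    ne_top_of_le_ne_top (summable_levels.mul_left c).tsum_ofReal_ne_top
      (ENNReal.tsum_le_tsum hμE)
  filter_upwards [ae_finite_setOfPred_mem hsum] with X hX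
  have hbdd : ∀ n : ℤ, ∃ M : ℝ, 0 ≤ M ∧ ∀ t ∈ Set.Icc (n : ℝ) (n + 1), ‖X t‖ ≤ M := fun n => by
    obtain ⟨M, hM⟩ := (isCompact_Icc (a := (n : ℝ)) (b := n + 1)).exists_bound_of_continuousOn
      X.continuous.continuousOn
    exact ⟨M, (norm_nonneg _).trans (hM n ⟨le_rfl, by linarith⟩), hM⟩
  choose M hM0 hM using hbdd
  have hlog3 : 0 ≤ 2 / θ * Real.log 3 := mul_nonneg hK.le (Real.log_nonneg (by norm_num))
  refine ⟨∑ n ∈ hX.toFinset, M n + (2 / θ * Real.log 3) ^ (1 / (s + 1)), fun t => ?_⟩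
  have hlogt : 0 ≤ 2 / θ * Real.log (|t| + 1) :=
    mul_nonneg hK.le (Real.log_nonneg (by linarith [abs_nonneg t]))
  have hA := Real.rpow_nonneg hlogt (1 / (s + 1))
  have hB := Real.rpow_nonneg hlog3 (1 / (s + 1))
  have hS : 0 ≤ ∑ n ∈ hX.toFinset, M n := Finset.sum_nonneg fun n _ => hM0 n
  have hfl := Int.floor_le t
  have hfl' := (Int.lt_floor_add_one t).le
  by_cases hmem : X ∈ E ⌊t⌋
  · have h1 := hM ⌊t⌋ t ⟨hfl, hfl'⟩
    have h2 := Finset.single_le_sum (f := M) (fun n _ => hM0 n)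
      (hX.mem_toFinset.2 hmem)
    linarith
  · have h1 : ‖X t‖ < a ⌊t⌋ := by
      by_contra! hcon
      exact hmem ⟨t - ⌊t⌋, ⟨by linarith, by linarith⟩, by simpa using hcon⟩
    have habs : |(⌊t⌋ : ℝ)| ≤ |t| + 1 := by
      rw [abs_le]
      constructor <;> linarith [neg_abs_le t, le_abs_self t]
    have h2 : a ⌊t⌋ ≤ (2 / θ * Real.log (|t| + 1) + 2 / θ * Real.log 3) ^ (1 / (s + 1)) := by
      have ht := abs_nonneg t
      rw [← mul_add, ← Real.log_mul (by positivity) (by norm_num)]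
      have hfn := abs_nonneg (⌊t⌋ : ℝ)
      refine Real.rpow_le_rpow
        (mul_nonneg hK.le (Real.log_nonneg (by linarith))) ?_ hp0
      refine mul_le_mul_of_nonneg_left (Real.log_le_log (by linarith) (by linarith)) hK.le
    have h3 := Real.rpow_add_le_add_rpow hlogt hlog3 hp0 hp1
    linarith
end
end
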